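/- arXiv:0805.0674 — 5 statements merged into one kernel-verified Lean document; each statement's English description precedes it below -/
import Mathlib

section
/- Let μ be a fuzzy field membership function on ℝ such that there exists a > 0 with μ(x) ≥ a for all x ∈ ℝ. Then a sequence (x_n) of real numbers converges to l in ℝ (in the usual sense) if and only if (x_n) μ-converges to l. -/
/-- A fuzzy field membership function on ℝ. -/
def IsFuzzyField (μ : ℝ → ℝ) : Prop :=
  (∀ x : ℝ, 0 ≤ μ x ∧ μ x ≤ 1) ∧
  (∀ x y : ℝ, μ (x + y) ≥ min (μ x) (μ y)) ∧
  (∀ x : ℝ, μ (-x) ≥ μ x) ∧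
  (∀ x y : ℝ, μ (x * y) ≥ min (μ x) (μ y)) ∧
  (∀ x : ℝ, μ x⁻¹ ≥ μ x) ∧
  μ 0 = 1 ∧ μ 1 = 1

/-- μ-convergence of a real sequence. -/
def MuTendsto (μ : ℝ → ℝ) (x : ℕ → ℝ) (x₀ : ℝ) : Prop :=
  ∀ ε > 0, ∃ k : ℕ, ∀ n ≥ k, |x n - x₀| * μ (x n - x₀) < ε

open Filter Topology Asymptotics

section Weights

variable {ι E : Type*} [SeminormedAddCommGroup E] {F : Filter ι}

lemma isTheta_one_of_le_norm_of_norm_le {w : ι → E} {a b : ℝ} (ha : 0 < a)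
    (haw : ∀ᶠ i in F, a ≤ ‖w i‖) (hwb : ∀ᶠ i in F, ‖w i‖ ≤ b) :
    w =Θ[F] (fun _ ↦ (1 : ℝ)) := by
  constructor
  · refine IsBigO.of_bound b ?_
    simpa only [norm_one, mul_one] using hwb
  · refine IsBigO.of_bound a⁻¹ ?_
    simpa only [norm_one, ← div_eq_inv_mul, one_le_div ha] using haw

lemma tendsto_iff_norm_sub_mul_tendsto_zero {w : ι → ℝ} (hw : w =Θ[F] (fun _ ↦ (1 : ℝ)))
    {x : ι → E} {l : E} :
    Tendsto x F (𝓝 l) ↔ Tendsto (fun i ↦ ‖x i - l‖ * w i) F (𝓝 0) := by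
  have h_theta : (fun i ↦ ‖x i - l‖ * w i) =Θ[F] (fun i ↦ ‖x i - l‖) := by
    simpa only [mul_one] using (isTheta_refl (fun i ↦ ‖x i - l‖) F).mul hw
  rw [h_theta.tendsto_zero_iff, tendsto_iff_norm_sub_tendsto_zero]

theorem stmt_12_general {μ : E → ℝ} {a b : ℝ} (ha : 0 < a) (haμ : ∀ t, a ≤ |μ t|)
    (hμb : ∀ t, |μ t| ≤ b) (x : ι → E) (l : E) :
    Tendsto x F (𝓝 l) ↔ Tendsto (fun i ↦ ‖x i - l‖ * μ (x i - l)) F (𝓝 0) :=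
  tendsto_iff_norm_sub_mul_tendsto_zero <|
    isTheta_one_of_le_norm_of_norm_le ha (.of_forall fun _ ↦ haμ _) (.of_forall fun _ ↦ hμb _)

end Weights

lemma muTendsto_iff_tendsto_zero {μ : ℝ → ℝ} (hμ : ∀ t, 0 ≤ μ t) {x : ℕ → ℝ} {l : ℝ} :
    MuTendsto μ x l ↔ Tendsto (fun n ↦ ‖x n - l‖ * μ (x n - l)) atTop (𝓝 0) := by
  simp only [MuTendsto, Metric.tendsto_atTop, Real.dist_0_eq_abs, Real.norm_eq_abs, abs_mul,
    abs_abs, abs_of_nonneg (hμ _)]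

theorem stmt_12 (μ : ℝ → ℝ) (hμ : IsFuzzyField μ)
    (a : ℝ) (ha : a > 0) (hbound : ∀ x : ℝ, μ x ≥ a)
    (x : ℕ → ℝ) (l : ℝ) :
    Filter.Tendsto x Filter.atTop (nhds l) ↔ MuTendsto μ x l := by
  have h_abs (t : ℝ) : |μ t| = μ t := abs_of_nonneg (hμ.1 t).1
  rw [muTendsto_iff_tendsto_zero fun t ↦ (hμ.1 t).1]
  exact stmt_12_general ha (fun t ↦ (hbound t).trans_eq (h_abs t).symm)
    (fun t ↦ (h_abs t).trans_le (hμ.1 t).2) x l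
end

section
/- Let μ be a fuzzy field membership function on ℝ such that there exists a > 0 with μ(x) ≥ a for all x ∈ ℝ. If a sequence (x_n) of real numbers μ-converges to l and also μ-converges to l′, then l = l′ (i.e., the μ-limit is unique). -/
open Filter Topology

theorem tendsto_of_tendsto_dist_mul_zero {ι X : Type*} [PseudoMetricSpace X] {f : Filter ι}
    {x : ι → X} {l : X} {w : ι → ℝ} {a : ℝ} (ha : 0 < a) (hw : ∀ᶠ i in f, a ≤ w i)
    (h : Tendsto (fun i ↦ dist (x i) l * w i) f (𝓝 0)) : Tendsto x f (𝓝 l) := by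
  have dist_le : ∀ᶠ i in f, dist (x i) l ≤ dist (x i) l * w i / a := by
    filter_upwards [hw] with i hi
    rw [le_div_iff₀ ha]
    gcongr
  have bound_tendsto : Tendsto (fun i ↦ dist (x i) l * w i / a) f (𝓝 0) := by
    simpa only [zero_div] using h.div_const a
  exact tendsto_iff_dist_tendsto_zero.2 <|
    squeeze_zero' (.of_forall fun _ ↦ dist_nonneg) dist_le bound_tendsto

theorem muTendsto_iff_tendsto_dist_mul_zero {μ : ℝ → ℝ} (hμ : ∀ y, 0 ≤ μ y)
    {x : ℕ → ℝ} {l : ℝ} :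
    MuTendsto μ x l ↔ Tendsto (fun n ↦ dist (x n) l * μ (x n - l)) atTop (𝓝 0) := by
  simp only [MuTendsto, Metric.tendsto_atTop, Real.dist_eq, sub_zero, abs_mul, abs_abs,
    abs_of_nonneg (hμ _)]

theorem stmt_13_general {ι X : Type*} [MetricSpace X] {f : Filter ι} [f.NeBot]
    {w : X → X → ℝ} {a : ℝ} (ha : 0 < a) (hw : ∀ y z, a ≤ w y z) {x : ι → X} {l l' : X}
    (hl : Tendsto (fun i ↦ dist (x i) l * w (x i) l) f (𝓝 0))
    (hl' : Tendsto (fun i ↦ dist (x i) l' * w (x i) l') f (𝓝 0)) : l = l' :=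
  tendsto_nhds_unique
    (tendsto_of_tendsto_dist_mul_zero ha (.of_forall fun _ ↦ hw _ _) hl)
    (tendsto_of_tendsto_dist_mul_zero ha (.of_forall fun _ ↦ hw _ _) hl')

theorem stmt_13 (μ : ℝ → ℝ) (hμ : IsFuzzyField μ)
    (a : ℝ) (ha : a > 0) (hbound : ∀ x : ℝ, μ x ≥ a)
    (x : ℕ → ℝ) (l l' : ℝ)
    (h1 : MuTendsto μ x l) (h2 : MuTendsto μ x l') : l = l' := by
  have limit_iff {z : ℝ} := muTendsto_iff_tendsto_dist_mul_zero (x := x) (l := z) fun y ↦ (hμ.1 y).1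
  exact stmt_13_general (w := fun y z ↦ μ (y - z)) ha (fun _ _ ↦ hbound _)
    (limit_iff.1 h1) (limit_iff.1 h2)
end

section
/- Let μ be a fuzzy field membership function on ℝ such that there exists a > 0 with μ(x) ≥ a for all x ∈ ℝ. If a sequence (x_n) of real numbers μ-converges to some l ∈ ℝ, then (x_n) is μ-bounded, i.e., the set {x_n·μ(x_n) : n ∈ ℕ} is bounded in ℝ. -/
/-! The fuzzy field axioms give `μ l * μ y ≤ μ (y - l)`, so if `μ l > 0` then μ-convergence of `x`
to `l` forces `(x n - l) * μ (x n) → 0`. Hence `x n * μ (x n) = (x n - l) * μ (x n) + l * μ (x n)`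
is the sum of a null sequence and one bounded by `|l|`. -/

open Filter Topology

namespace IsFuzzyField

variable {μ : ℝ → ℝ}

theorem abs_apply (hμ : IsFuzzyField μ) (y : ℝ) : |μ y| = μ y :=
  abs_of_nonneg (hμ.1 y).1

theorem min_le_apply_sub (hμ : IsFuzzyField μ) (y z : ℝ) : min (μ y) (μ z) ≤ μ (y - z) := by
  obtain ⟨-, hadd, hneg, -⟩ := hμ
  calc min (μ y) (μ z) ≤ min (μ y) (μ (-z)) := min_le_min_left _ (hneg z)
    _ ≤ μ (y + -z) := hadd y (-z)
    _ = μ (y - z) := by rw [sub_eq_add_neg]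

theorem mul_le_apply_sub (hμ : IsFuzzyField μ) (y z : ℝ) : μ z * μ y ≤ μ (y - z) := by
  obtain ⟨hy₀, hy₁⟩ := hμ.1 y
  obtain ⟨hz₀, hz₁⟩ := hμ.1 z
  exact (le_min (mul_le_of_le_one_left hy₀ hz₁) (mul_le_of_le_one_right hz₀ hy₁)).trans
    (hμ.min_le_apply_sub y z)

end IsFuzzyField

namespace MuTendsto

variable {μ : ℝ → ℝ} {x : ℕ → ℝ} {l c : ℝ}

theorem tendsto_sub_mul (h : MuTendsto μ x l) (hc : 0 < c)
    (hμ : ∀ y, c * |μ y| ≤ μ (y - l)) :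
    Tendsto (fun n ↦ (x n - l) * μ (x n)) atTop (𝓝 0) := by
  refine Metric.tendsto_atTop.2 fun ε hε ↦ ?_
  obtain ⟨k, hk⟩ := h (c * ε) (mul_pos hc hε)
  refine ⟨k, fun n hn ↦ ?_⟩
  rw [dist_zero_right, Real.norm_eq_abs, abs_mul]
  refine lt_of_mul_lt_mul_left ?_ hc.le
  calc c * (|x n - l| * |μ (x n)|) = |x n - l| * (c * |μ (x n)|) := mul_left_comm ..
    _ ≤ |x n - l| * μ (x n - l) := mul_le_mul_of_nonneg_left (hμ _) (abs_nonneg _)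
    _ < c * ε := hk n hn

theorem isBounded_mul {C : ℝ} (h : MuTendsto μ x l) (hc : 0 < c)
    (hμ : ∀ y, c * |μ y| ≤ μ (y - l)) (hC : ∀ y, |μ y| ≤ C) :
    Bornology.IsBounded {y : ℝ | ∃ n : ℕ, y = x n * μ (x n)} := by
  obtain ⟨B, hB⟩ := isBounded_iff_forall_norm_le.1
    (Metric.isBounded_range_of_tendsto _ (h.tendsto_sub_mul hc hμ))
  refine isBounded_iff_forall_norm_le.2 ⟨B + |l| * C, ?_⟩
  rintro _ ⟨n, rfl⟩
  calc ‖x n * μ (x n)‖ = ‖(x n - l) * μ (x n) + l * μ (x n)‖ := by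
        rw [← add_mul, sub_add_cancel]
    _ ≤ ‖(x n - l) * μ (x n)‖ + ‖l * μ (x n)‖ := norm_add_le _ _
    _ = ‖(x n - l) * μ (x n)‖ + |l| * |μ (x n)| := by rw [Real.norm_eq_abs (l * _), abs_mul]
    _ ≤ B + |l| * C :=
        add_le_add (hB _ ⟨n, rfl⟩) (mul_le_mul_of_nonneg_left (hC _) (abs_nonneg l))

end MuTendsto

theorem stmt_14_general {μ : ℝ → ℝ} (hμ : IsFuzzyField μ) {x : ℕ → ℝ} {l : ℝ} (hl : 0 < μ l)
    (h : MuTendsto μ x l) :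
    Bornology.IsBounded {y : ℝ | ∃ n : ℕ, y = x n * μ (x n)} := by
  refine h.isBounded_mul (C := 1) hl (fun y ↦ ?_) (fun y ↦ ?_) <;> rw [hμ.abs_apply]
  · exact hμ.mul_le_apply_sub y l
  · exact (hμ.1 y).2

theorem stmt_14 (μ : ℝ → ℝ) (hμ : IsFuzzyField μ)
    (a : ℝ) (ha : a > 0) (hbound : ∀ x : ℝ, μ x ≥ a)
    (x : ℕ → ℝ) (l : ℝ) (h : MuTendsto μ x l) :
    Bornology.IsBounded {y : ℝ | ∃ n : ℕ, y = x n * μ (x n)} :=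
  stmt_14_general hμ (ha.trans_le (hbound l)) h
end

section
/- Let μ be a fuzzy field membership function on ℝ such that there exists a > 0 with μ(x) ≥ a for all x ∈ ℝ. If (x_n) μ-converges to l and (y_n) μ-converges to m, then (x_n + y_n) μ-converges to l + m. -/
/-! When the weight `μ` is bounded below by a positive constant and bounded above near `0`, the
quantities `|t| * μ t` and `|t|` control each other as `t → 0`, so `μ`-convergence is ordinary
convergence. -/

open Filter Topology

namespace MuTendsto

variable {μ : ℝ → ℝ} {x : ℕ → ℝ} {l a : ℝ}

theorem tendsto (hx : MuTendsto μ x l) (ha : 0 < a) (hμ : ∀ t, a ≤ μ t) :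
    Tendsto x atTop (𝓝 l) := by
  refine Metric.tendsto_atTop.2 fun ε hε => ?_
  obtain ⟨k, hk⟩ := hx (ε * a) (mul_pos hε ha)
  refine ⟨k, fun n hn => lt_of_mul_lt_mul_right ?_ ha.le⟩
  calc dist (x n) l * a
      ≤ |x n - l| * μ (x n - l) := mul_le_mul_of_nonneg_left (hμ _) (abs_nonneg _)
    _ < ε * a := hk n hn

theorem of_tendsto (hx : Tendsto x atTop (𝓝 l)) (hμ : (𝓝 0).IsBoundedUnder (· ≤ ·) μ) :
    MuTendsto μ x l := by
  intro ε hε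
  obtain ⟨b, hb⟩ := hμ.eventually_le
  have hsub : Tendsto (fun n => x n - l) atTop (𝓝 0) := tendsto_sub_nhds_zero_iff.2 hx
  have hmul : Tendsto (fun n => |x n - l| * b) atTop (𝓝 0) := by
    simpa only [abs_zero, zero_mul] using hsub.abs.mul_const b
  refine eventually_atTop.1 ?_
  filter_upwards [hmul.eventually_lt_const hε, hsub.eventually hb] with n hlt hle
  exact (mul_le_mul_of_nonneg_left hle (abs_nonneg _)).trans_lt hlt

end MuTendsto

theorem muTendsto_iff_tendsto {μ : ℝ → ℝ} {x : ℕ → ℝ} {l a : ℝ} (ha : 0 < a)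
    (hlower : ∀ t, a ≤ μ t) (hupper : (𝓝 0).IsBoundedUnder (· ≤ ·) μ) :
    MuTendsto μ x l ↔ Tendsto x atTop (𝓝 l) :=
  ⟨fun hx => hx.tendsto ha hlower, fun hx => .of_tendsto hx hupper⟩

theorem IsFuzzyField.le_one {μ : ℝ → ℝ} (hμ : IsFuzzyField μ) (t : ℝ) : μ t ≤ 1 :=
  (hμ.1 t).2

theorem stmt_16_general {μ : ℝ → ℝ} {x y : ℕ → ℝ} {l m a : ℝ} (ha : 0 < a)
    (hlower : ∀ t, a ≤ μ t) (hupper : (𝓝 0).IsBoundedUnder (· ≤ ·) μ)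
    (hx : MuTendsto μ x l) (hy : MuTendsto μ y m) :
    MuTendsto μ (fun n => x n + y n) (l + m) := by
  rw [muTendsto_iff_tendsto ha hlower hupper] at hx hy ⊢
  exact hx.add hy

theorem stmt_16 (μ : ℝ → ℝ) (hμ : IsFuzzyField μ)
    (a : ℝ) (ha : a > 0) (hbound : ∀ x : ℝ, μ x ≥ a)
    (x y : ℕ → ℝ) (l m : ℝ)
    (hx : MuTendsto μ x l) (hy : MuTendsto μ y m) :
    MuTendsto μ (fun n => x n + y n) (l + m) :=
  stmt_16_general ha hbound (isBoundedUnder_of ⟨1, hμ.le_one⟩) hx hy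
end

section
/- Let μ be a fuzzy field membership function on ℝ such that there exists a > 0 with μ(x) ≥ a for all x ∈ ℝ. If (x_n) μ-converges to l and (y_n) μ-converges to m, then (x_n·y_n) μ-converges to l·m. -/
open Filter Topology

section WeightedTendsto

variable {ι E : Type*} {F : Filter ι}

/-- Convergence of `x` to `l` along `F` for distances weighted by `μ`: the analogue of `MuTendsto`
for arbitrary filters and seminormed groups. Where `μ` takes negative values it is
stronger than `MuTendsto`, which bounds the weighted distance only from above. -/
def WeightedTendsto [SeminormedAddCommGroup E] (μ : E → ℝ) (x : ι → E) (F : Filter ι) (l : E) :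
    Prop :=
  Tendsto (fun i => ‖x i - l‖ * μ (x i - l)) F (𝓝 0)

theorem WeightedTendsto.tendsto [SeminormedAddCommGroup E] {μ : E → ℝ} {a : ℝ} (ha : 0 < a)
    (hμ : ∀ t, a ≤ μ t) {x : ι → E} {l : E} (hx : WeightedTendsto μ x F l) :
    Tendsto x F (𝓝 l) := by
  have norm_le (i : ι) : ‖x i - l‖ ≤ ‖x i - l‖ * μ (x i - l) / a :=
    (le_div_iff₀ ha).2 (mul_le_mul_of_nonneg_left (hμ _) (norm_nonneg _))
  have bound_tendsto : Tendsto (fun i => ‖x i - l‖ * μ (x i - l) / a) F (𝓝 0) := by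
    simpa only [zero_div] using Tendsto.div_const hx a
  exact tendsto_iff_norm_sub_tendsto_zero.2
    (squeeze_zero (fun _ => norm_nonneg _) norm_le bound_tendsto)

theorem WeightedTendsto.of_tendsto [SeminormedAddCommGroup E] {μ : E → ℝ}
    (hμ : (𝓝 0).IsBoundedUnder (· ≤ ·) fun t => ‖μ t‖) {x : ι → E} {l : E}
    (hx : Tendsto x F (𝓝 l)) : WeightedTendsto μ x F l := by
  have sub_tendsto : Tendsto (fun i => x i - l) F (𝓝 0) := tendsto_sub_nhds_zero_iff.2 hx
  exact (tendsto_iff_norm_sub_tendsto_zero.1 hx).zero_mul_isBoundedUnder_le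
    (sub_tendsto.isBoundedUnder_comp hμ)

theorem stmt_18_general [NonUnitalSeminormedRing E] {μ : E → ℝ} {a : ℝ} (ha : 0 < a)
    (hlower : ∀ t, a ≤ μ t) (hupper : (𝓝 0).IsBoundedUnder (· ≤ ·) fun t => ‖μ t‖)
    {x y : ι → E} {l m : E} (hx : WeightedTendsto μ x F l) (hy : WeightedTendsto μ y F m) :
    WeightedTendsto μ (fun i => x i * y i) F (l * m) :=
  .of_tendsto hupper ((hx.tendsto ha hlower).mul (hy.tendsto ha hlower))

end WeightedTendsto

theorem muTendsto_iff_weightedTendsto {μ : ℝ → ℝ} (hμ : ∀ t, 0 ≤ μ t) {x : ℕ → ℝ} {l : ℝ} :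
    MuTendsto μ x l ↔ WeightedTendsto μ x atTop l := by
  have abs_weighted (t : ℝ) : |(|t| * μ t)| = |t| * μ t :=
    abs_of_nonneg (mul_nonneg (abs_nonneg t) (hμ t))
  simp only [MuTendsto, WeightedTendsto, Metric.tendsto_atTop, Real.dist_0_eq_abs,
    Real.norm_eq_abs, abs_weighted]

theorem IsFuzzyField.isBoundedUnder_norm {μ : ℝ → ℝ} (hμ : IsFuzzyField μ) (F : Filter ℝ) :
    F.IsBoundedUnder (· ≤ ·) fun t => ‖μ t‖ :=
  isBoundedUnder_of ⟨1, fun t => (Real.norm_of_nonneg (hμ.1 t).1).trans_le (hμ.1 t).2⟩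

theorem stmt_18 (μ : ℝ → ℝ) (hμ : IsFuzzyField μ)
    (a : ℝ) (ha : a > 0) (hbound : ∀ x : ℝ, μ x ≥ a)
    (x y : ℕ → ℝ) (l m : ℝ)
    (hx : MuTendsto μ x l) (hy : MuTendsto μ y m) :
    MuTendsto μ (fun n => x n * y n) (l * m) := by
  rw [muTendsto_iff_weightedTendsto fun t => (hμ.1 t).1] at hx hy ⊢
  exact stmt_18_general ha hbound (hμ.isBoundedUnder_norm _) hx hy
end
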